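/- Let α ≥ 3, β > 0, t₀ > 0, let Φ : H → ℝ be convex and twice continuously differentiable with argmin Φ nonempty and with ∇Φ Lipschitz continuous on bounded subsets of H, let g : [t₀, ∞) → H be continuous with ∫_{t₀}^∞ t‖g(t)‖ dt < ∞, and let x : [t₀, ∞) → H be a twice continuously differentiable curve satisfying the perturbed equation ẍ(t) + (α/t)ẋ(t) + β∇²Φ(x(t))ẋ(t) + ∇Φ(x(t)) = g(t) for all t ≥ t₀. Then there is a constant C such that Φ(x(t)) − min Φ ≤ C/t² for all t ≥ t₀. -/

import Mathlib

open Filter MeasureTheory Set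
open scoped Topology RealInnerProductSpace

variable {H : Type*} [NormedAddCommGroup H] [InnerProductSpace ℝ H] [CompleteSpace H]

/-- `x`, together with its first and second derivatives `x'`, `x''`, is a twice continuously
differentiable solution of (DIN-AVD) on `[t₀, ∞)`:
`ẍ(t) + (α/t) ẋ(t) + β ∇²Φ(x(t)) ẋ(t) + ∇Φ(x(t)) = 0`. -/
def IsDINAVDSolution (α β t₀ : ℝ) (Φ : H → ℝ) (x x' x'' : ℝ → H) : Prop :=
  (∀ t ∈ Set.Ici t₀, HasDerivAt x (x' t) t) ∧
  (∀ t ∈ Set.Ici t₀, HasDerivAt x' (x'' t) t) ∧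
  ContinuousOn x'' (Set.Ici t₀) ∧
  ∀ t ∈ Set.Ici t₀,
    x'' t + (α / t) • x' t + β • (fderiv ℝ (gradient Φ) (x t)) (x' t)
      + gradient Φ (x t) = 0

lemma grad_hasFDeriv (Φ : H → ℝ) (hΦ : ContDiff ℝ 2 Φ) : ContDiff ℝ 1 (gradient Φ) := by
  have h1 : ContDiff ℝ 1 (fderiv ℝ Φ) := hΦ.fderiv_right (by norm_num)
  exact ((InnerProductSpace.toDual ℝ H).symm.toContinuousLinearEquiv.contDiff).comp h1

lemma grad_chain (Φ : H → ℝ) (hΦ : ContDiff ℝ 2 Φ) (x : ℝ → H) (v : H) (t : ℝ)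
    (hx : HasDerivAt x v t) : HasDerivAt (fun s => Φ (x s)) ⟪gradient Φ (x t), v⟫ t := by
  have h := (hΦ.differentiable (by norm_num) (x t)).hasGradientAt.hasFDerivAt
  have := h.comp_hasDerivAt t hx
  simpa [Function.comp_def] using this

lemma convex_grad (Φ : H → ℝ) (hconv : ConvexOn ℝ Set.univ Φ) (hΦ : ContDiff ℝ 2 Φ) (x y : H) :
    Φ x - Φ y ≤ ⟪gradient Φ x, x - y⟫ := by
  have h1 : ConvexOn ℝ Set.univ (fun s : ℝ => Φ (AffineMap.lineMap x y s)) := by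
    simpa [Function.comp_def] using hconv.comp_affineMap (AffineMap.lineMap x y : ℝ →ᵃ[ℝ] H)
  have h2 : HasDerivAt (fun s : ℝ => (AffineMap.lineMap x y s : H)) (y - x) 0 :=
    AffineMap.hasDerivAt_lineMap
  have h3 := grad_chain Φ hΦ _ _ _ h2
  have h4 := h1.le_slope_of_hasDerivAt (x := 0) (y := 1) (by simp) (by simp) (by simp) h3
  simp only [slope_def_field, AffineMap.lineMap_apply_zero, AffineMap.lineMap_apply_one, sub_zero,
    div_one] at h4
  have : ⟪gradient Φ x, x - y⟫ = - ⟪gradient Φ x, y - x⟫ := by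
    rw [← inner_neg_right, neg_sub]
  linarith

theorem stmt18 (α β t₀ : ℝ) (hα : 3 ≤ α) (hβ : 0 < β) (ht₀ : 0 < t₀)
    (Φ : H → ℝ) (hconv : ConvexOn ℝ Set.univ Φ) (hΦ : ContDiff ℝ 2 Φ)
    (xstar : H) (hmin : ∀ z, Φ xstar ≤ Φ z)
    (hlip : ∀ s : Set H, Bornology.IsBounded s →
      ∃ K : NNReal, LipschitzOnWith K (gradient Φ) s)
    (g : ℝ → H) (hg : ContinuousOn g (Set.Ici t₀))
    (hgint : IntegrableOn (fun t => t * ‖g t‖) (Set.Ici t₀))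
    (x x' x'' : ℝ → H)
    (hx' : ∀ t ∈ Set.Ici t₀, HasDerivAt x (x' t) t)
    (hx'' : ∀ t ∈ Set.Ici t₀, HasDerivAt x' (x'' t) t)
    (hcont : ContinuousOn x'' (Set.Ici t₀))
    (heq : ∀ t ∈ Set.Ici t₀,
      x'' t + (α / t) • x' t + β • (fderiv ℝ (gradient Φ) (x t)) (x' t)
        + gradient Φ (x t) = g t) :
    ∃ C : ℝ, ∀ t, t₀ ≤ t → Φ (x t) - Φ xstar ≤ C / t ^ 2 := by
  obtain ⟨t₁, ht₁, ht₁β⟩ : ∃ t₁, t₀ ≤ t₁ ∧ 2 * β ≤ t₁ :=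
    ⟨max t₀ (2 * β), le_max_left _ _, le_max_right _ _⟩
  have ht₁p : 0 < t₁ := by linarith
  have hW : ∀ t, t₀ ≤ t →
      HasDerivAt (fun s => Φ (x s) - Φ xstar) ⟪gradient Φ (x t), x' t⟫ t := fun t ht =>
    (grad_chain Φ hΦ x _ t (hx' t ht)).sub_const _
  -- compact part
  have hcomp : ∃ C₁, ∀ t ∈ Icc t₀ t₁, t ^ 2 * (Φ (x t) - Φ xstar) ≤ C₁ := by
    have hc : ContinuousOn (fun t => t ^ 2 * (Φ (x t) - Φ xstar)) (Icc t₀ t₁) := by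
      intro t ht
      exact ((continuous_pow 2).continuousAt.mul (hW t ht.1).continuousAt).continuousWithinAt
    obtain ⟨C₁, hC₁⟩ := (isCompact_Icc.image_of_continuousOn hc).bddAbove
    exact ⟨C₁, fun t ht => hC₁ (mem_image_of_mem _ ht)⟩
  obtain ⟨C₁, hC₁⟩ := hcomp
  set v : ℝ → H := fun t => (α - 1) • (x t - xstar) + t • (x' t + β • gradient Φ (x t)) with hv
  have hvd : ∀ t, t₀ ≤ t → HasDerivAt v ((β - t) • gradient Φ (x t) + t • g t) t := by
    intro t ht
    have htp : t ≠ 0 := by linarith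
    have hgr : HasDerivAt (fun s => gradient Φ (x s)) (fderiv ℝ (gradient Φ) (x t) (x' t)) t :=
      (((grad_hasFDeriv Φ hΦ).differentiable (by norm_num)) (x t)).hasFDerivAt.comp_hasDerivAt t
        (hx' t ht)
    have h := (((hx' t ht).sub_const xstar).const_smul (α - 1)).add
      ((hasDerivAt_id t).smul ((hx'' t ht).add (hgr.const_smul β)))
    refine h.congr_deriv ?_
    rw [← heq t ht]
    simp only [id, smul_add, smul_smul, Pi.add_apply, Pi.smul_apply]
    rw [mul_div_cancel₀ _ htp]
    module
  set E : ℝ → ℝ := fun t => t * (t - β) * (Φ (x t) - Φ xstar) + (1 / 2) * ⟪v t, v t⟫ with hE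
  have hEd : ∀ t, t₀ ≤ t → HasDerivAt E ((2 * t - β) * (Φ (x t) - Φ xstar)
      - (t - β) * (α - 1) * ⟪gradient Φ (x t), x t - xstar⟫
      - (t - β) * t * β * ‖gradient Φ (x t)‖ ^ 2 + t * ⟪g t, v t⟫) t := by
    intro t ht
    have h1 : HasDerivAt (fun s : ℝ => s * (s - β)) (1 * (t - β) + t * 1) t :=
      (hasDerivAt_id t).mul ((hasDerivAt_id t).sub_const β)
    have h2 := (h1.mul (hW t ht)).add
      (((hvd t ht).inner ℝ (hvd t ht)).const_mul (1 / 2 : ℝ))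
    refine h2.congr_deriv ?_
    rw [real_inner_comm ((β - t) • gradient Φ (x t) + t • g t) (v t)]
    have h3 : ⟪gradient Φ (x t), v t⟫ = (α - 1) * ⟪gradient Φ (x t), x t - xstar⟫
        + t * (⟪gradient Φ (x t), x' t⟫ + β * ‖gradient Φ (x t)‖ ^ 2) := by
      simp only [hv, inner_add_right, inner_smul_right, real_inner_self_eq_norm_sq]
    simp only [inner_add_left, inner_smul_left, h3]
    simp
    ring
  set c : ℝ := 2 * (α - 2) * β with hc
  have hcp : 0 ≤ c := by
    have : 0 ≤ α - 2 := by linarith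
    positivity
  have hEW : ∀ t, t₁ ≤ t → t ^ 2 / 2 * (Φ (x t) - Φ xstar) + (1 / 2) * ‖v t‖ ^ 2 ≤ E t := by
    intro t ht
    simp only [hE, real_inner_self_eq_norm_sq]
    have : 0 ≤ Φ (x t) - Φ xstar := sub_nonneg.2 (hmin _)
    have h2 : t ^ 2 / 2 ≤ t * (t - β) := by nlinarith
    gcongr
  have hE0 : ∀ t, t₁ ≤ t → 0 ≤ E t := by
    intro t ht
    have : 0 ≤ Φ (x t) - Φ xstar := sub_nonneg.2 (hmin _)
    exact le_trans (by positivity) (hEW t ht)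
  have hEb : ∀ t, t₁ ≤ t → (2 * t - β) * (Φ (x t) - Φ xstar)
      - (t - β) * (α - 1) * ⟪gradient Φ (x t), x t - xstar⟫
      - (t - β) * t * β * ‖gradient Φ (x t)‖ ^ 2 + t * ⟪g t, v t⟫
      ≤ (c / t ^ 2 + t * ‖g t‖) * (E t + 1) := by
    intro t ht
    have htp : 0 < t := by linarith
    have hW0 : 0 ≤ Φ (x t) - Φ xstar := sub_nonneg.2 (hmin _)
    have hcv := convex_grad Φ hconv hΦ (x t) xstar
    have htb : 0 ≤ t - β := by linarith
    have i1 : (t - β) * (α - 1) * (Φ (x t) - Φ xstar) ≤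
        (t - β) * (α - 1) * ⟪gradient Φ (x t), x t - xstar⟫ :=
      mul_le_mul_of_nonneg_left hcv (mul_nonneg htb (by linarith))
    have i2 : 0 ≤ (t - β) * t * β * ‖gradient Φ (x t)‖ ^ 2 := by positivity
    have hvE : ‖v t‖ ≤ E t + 1 := by
      have := hEW t ht
      have : 0 ≤ t ^ 2 / 2 * (Φ (x t) - Φ xstar) := by positivity
      nlinarith [sq_nonneg (‖v t‖ - 1)]
    have i3 : t * ⟪g t, v t⟫ ≤ t * ‖g t‖ * (E t + 1) := by
      rw [mul_assoc]
      apply mul_le_mul_of_nonneg_left _ htp.le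
      exact (real_inner_le_norm _ _).trans (mul_le_mul_of_nonneg_left hvE (norm_nonneg _))
    have i4 : (α - 2) * β * (Φ (x t) - Φ xstar) ≤ c / t ^ 2 * (E t + 1) := by
      have h5 : t ^ 2 / 2 * (Φ (x t) - Φ xstar) ≤ E t + 1 := by
        have := hEW t ht
        nlinarith [sq_nonneg (‖v t‖)]
      have h6 := mul_le_mul_of_nonneg_left h5 (show 0 ≤ c / t ^ 2 by positivity)
      refine le_trans (le_of_eq ?_) h6
      rw [hc]; field_simp
    have i5 : 0 ≤ (α - 3) * t * (Φ (x t) - Φ xstar) :=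
      mul_nonneg (mul_nonneg (by linarith) htp.le) hW0
    nlinarith
  set G : ℝ → ℝ := fun t => ∫ s in t₁..t, s * ‖g s‖ with hG
  have hgc : ContinuousOn (fun s => s * ‖g s‖) (Ici t₀) := continuousOn_id.mul hg.norm
  have hGint : ∀ t, t₁ ≤ t → IntervalIntegrable (fun s => s * ‖g s‖) volume t₁ t := by
    intro t ht
    rw [intervalIntegrable_iff_integrableOn_Ioc_of_le ht]
    exact hgint.mono_set fun s hs => ht₁.trans hs.1.le
  have hGd : ∀ t, t₁ < t → HasDerivAt G (t * ‖g t‖) t := by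
    intro t ht
    have hn : Ici t₀ ∈ 𝓝 t := Ici_mem_nhds (by linarith)
    refine intervalIntegral.integral_hasDerivAt_right (hGint t ht.le) ?_ (hgc.continuousAt hn)
    exact ⟨Ici t₀, hn, hgint.aestronglyMeasurable⟩
  have hGc : ContinuousOn G (Ici t₁) := by
    intro t ht
    have hcc : ContinuousOn G (Icc t₁ (t + 1)) := by
      have := intervalIntegral.continuousOn_primitive_interval (f := fun s => s * ‖g s‖)
        (μ := volume) (a := t₁) (b := t + 1) (by
          rw [uIcc_of_le (by linarith [mem_Ici.1 ht])]
          exact hgint.mono_set fun s hs => ht₁.trans hs.1)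
      rwa [uIcc_of_le (by linarith [mem_Ici.1 ht])] at this
    refine (hcc t ⟨ht, by linarith⟩).mono_of_mem_nhdsWithin ?_
    rw [← Ici_inter_Iic]
    exact inter_mem self_mem_nhdsWithin (mem_nhdsWithin_of_mem_nhds (Iic_mem_nhds (by linarith)))
  set I : ℝ := ∫ s in Ici t₀, s * ‖g s‖ with hI
  have hGI : ∀ t, t₁ ≤ t → G t ≤ I := by
    intro t ht
    simp only [hG, hI]
    rw [intervalIntegral.integral_of_le ht]
    refine setIntegral_mono_set hgint ?_ ?_
    · filter_upwards [ae_restrict_mem measurableSet_Ici] with s hs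
      exact mul_nonneg (ht₀.le.trans hs) (norm_nonneg _)
    · exact Eventually.of_forall fun s hs => ht₁.trans hs.1.le
  set P : ℝ → ℝ := fun t => (E t + 1) * Real.exp (-(G t - c / t)) with hP
  have hanti : AntitoneOn P (Ici t₁) := by
    have hPd : ∀ t, t₁ < t → HasDerivAt P (((2 * t - β) * (Φ (x t) - Φ xstar)
      - (t - β) * (α - 1) * ⟪gradient Φ (x t), x t - xstar⟫
      - (t - β) * t * β * ‖gradient Φ (x t)‖ ^ 2 + t * ⟪g t, v t⟫ 
      - (c / t ^ 2 + t * ‖g t‖) * (E t + 1)) * Real.exp (-(G t - c / t))) t := by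
      intro t ht
      have htp : t ≠ 0 := by linarith
      have h1 : HasDerivAt (fun s => c / s) (-(c / t ^ 2)) t := by
        have := (hasDerivAt_inv htp).const_mul c
        refine this.congr_deriv ?_
        ring
      have h2 := ((hEd t (by linarith)).add_const 1).mul ((hGd t ht).sub h1).neg.exp
      refine h2.congr_deriv ?_
      simp only [Pi.neg_apply, Pi.sub_apply]
      ring
    refine antitoneOn_of_deriv_nonpos (convex_Ici _) ?_ ?_ ?_
    · intro t ht
      have htp : t ≠ 0 := by linarith [mem_Ici.1 ht]
      have h1 : ContinuousWithinAt E (Ici t₁) t :=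
        (hEd t (ht₁.trans ht)).continuousAt.continuousWithinAt
      have h2 : ContinuousWithinAt (fun s => c / s) (Ici t₁) t :=
        (continuousAt_const.div continuousAt_id htp).continuousWithinAt
      exact (h1.add continuousWithinAt_const).mul
        (Real.continuous_exp.continuousAt.comp_continuousWithinAt ((hGc t ht).sub h2).neg)
    · intro t ht
      rw [interior_Ici] at ht
      exact (hPd t ht).differentiableAt.differentiableWithinAt
    · intro t ht
      rw [interior_Ici] at ht
      rw [(hPd t ht).deriv]
      exact mul_nonpos_of_nonpos_of_nonneg (sub_nonpos.2 (hEb t (le_of_lt ht))) (Real.exp_pos _).le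
  have hfin : ∀ t, t₁ ≤ t → E t ≤ P t₁ * Real.exp I := by
    intro t ht
    have h1 := hanti (mem_Ici.2 le_rfl) (mem_Ici.2 ht) ht
    have htp : 0 < t := by linarith
    have h2 : E t + 1 = P t * Real.exp (G t - c / t) := by
      simp only [hP]
      rw [mul_assoc, ← Real.exp_add]; simp
    have h3 : Real.exp (G t - c / t) ≤ Real.exp I := by
      apply Real.exp_le_exp.2
      have : 0 ≤ c / t := by positivity
      linarith [hGI t ht]
    have h4 : 0 ≤ P t₁ := mul_nonneg (by linarith [hE0 t₁ le_rfl]) (Real.exp_pos _).le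
    have h5 : P t * Real.exp (G t - c / t) ≤ P t₁ * Real.exp I :=
      mul_le_mul h1 h3 (Real.exp_pos _).le h4
    linarith
  refine ⟨max C₁ (2 * (P t₁ * Real.exp I)), fun t ht => ?_⟩
  have htp : 0 < t := by linarith
  rw [le_div_iff₀ (by positivity), mul_comm]
  rcases le_total t t₁ with h | h
  · exact (hC₁ t ⟨ht, h⟩).trans (le_max_left _ _)
  · refine le_trans ?_ (le_max_right _ _)
    have := hEW t h
    have := hfin t h
    nlinarith [sq_nonneg ‖v t‖]
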